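/- Every connected graph G has an optimal tree decomposition (T, {B_x}) such that for every oriented edge xy of T, the induced subgraph G_{x|y} of G on the union of the bags of the component of T - xy containing x is connected. -/

import Mathlib

/-!
Among the optimal tree decompositions with finitely many nodes, take one minimising `∑ |B_z|²`.
If `G_{x|y}` were disconnected, let `B` be the vertex set of one of its components. Since `G` is
connected, an edge of `G` leaves `B`; it also leaves `G_{x|y}`, so its end in `B` lies in `B_x`.
The same applies to the rest of `G_{x|y}`. Hence replacing the branch `T_{x|y}` by two copies, one
with its bags intersected with `B` and the other with `B` removed from its bags, gives an optimal
tree decomposition in which every bag of the branch is cut into two disjoint parts, and `B_x` into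
two nonempty ones, so that the sum of squares drops. Discarding the empty bags of a minimiser
ensures that no `G_{x|y}` is empty.
-/

open SimpleGraph

/-- A tree decomposition of a graph `G`. -/
structure TreeDecomp {V : Type} (G : SimpleGraph V) where
  ι : Type
  tree : SimpleGraph ι
  isTree : tree.IsTree
  bag : ι → Finset V
  covers : ∀ v : V, ∃ x, v ∈ bag x
  coversEdge : ∀ ⦃u v : V⦄, G.Adj u v → ∃ x, u ∈ bag x ∧ v ∈ bag x
  bagConn : ∀ v : V, (tree.induce {x | v ∈ bag x}).Connected

/-- `G` has a tree decomposition of width at most `k` (bags of size at most `k+1`). -/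
def TwLE {V : Type} (G : SimpleGraph V) (k : ℕ) : Prop :=
  ∃ D : TreeDecomp G, ∀ x, (D.bag x).card ≤ k + 1

/-- A path decomposition of a graph `G`: a sequence of bags. -/
structure PathDecomp {V : Type} (G : SimpleGraph V) where
  n : ℕ
  bag : Fin n → Finset V
  covers : ∀ v : V, ∃ i, v ∈ bag i
  coversEdge : ∀ ⦃u v : V⦄, G.Adj u v → ∃ i, u ∈ bag i ∧ v ∈ bag i
  consecutive : ∀ (v : V) (i j k : Fin n), i ≤ j → j ≤ k → v ∈ bag i → v ∈ bag k → v ∈ bag j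

/-- `G` has a path decomposition of width at most `k` (bags of size at most `k+1`). -/
def PwLE {V : Type} (G : SimpleGraph V) (k : ℕ) : Prop :=
  ∃ P : PathDecomp G, ∀ i, (P.bag i).card ≤ k + 1

/-- A copy of a subdivision of the tree `T` inside the graph `G`:
branch vertices `φ x`, and for each edge of `T` a path of `G` between the
corresponding branch vertices, internally disjoint from all branch vertices
and from the paths of all other edges. -/
structure SubdivCopy {α V : Type} (T : SimpleGraph α) (G : SimpleGraph V) where
  φ : α → V
  inj : Function.Injective φ
  path : ∀ ⦃x y : α⦄, T.Adj x y → G.Walk (φ x) (φ y)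
  isPath : ∀ ⦃x y : α⦄ (h : T.Adj x y), (path h).IsPath
  branch : ∀ ⦃x y : α⦄ (h : T.Adj x y) (z : α), φ z ∈ (path h).support → z = x ∨ z = y
  disj : ∀ ⦃x y x' y' : α⦄ (h : T.Adj x y) (h' : T.Adj x' y'),
    ({x, y} : Set α) ≠ {x', y'} →
    ∀ v, v ∈ (path h).support → v ∈ (path h').support →
      v ∈ φ '' (({x, y} : Set α) ∩ {x', y'})

/-- The set of vertices used by a subdivision copy. -/
def SubdivCopy.supp {α V : Type} {T : SimpleGraph α} {G : SimpleGraph V}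
    (c : SubdivCopy T G) : Set V :=
  Set.range c.φ ∪ {v | ∃ x y, ∃ h : T.Adj x y, v ∈ (c.path h).support}

/-- `G` contains a subdivision of `T` as a subgraph. -/
def ContainsSubdiv {α V : Type} (T : SimpleGraph α) (G : SimpleGraph V) : Prop :=
  Nonempty (SubdivCopy T G)

/-- `S` is (isomorphic to) a subdivision of `T`: a subdivision copy of `T`
using all vertices and all edges of `S`. -/
def IsSubdivisionOf {α W : Type} (T : SimpleGraph α) (S : SimpleGraph W) : Prop :=
  ∃ c : SubdivCopy T S, c.supp = Set.univ ∧
    ∀ ⦃u w : W⦄, S.Adj u w → ∃ x y, ∃ h : T.Adj x y, s(u, w) ∈ (c.path h).edges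

/-- The complete binary tree of height `h`, as a simple graph: vertices are
binary strings of length at most `h`, with edges between a string and its
one-letter extensions. -/
def CBT (h : ℕ) : SimpleGraph {l : List Bool // l.length ≤ h} :=
  SimpleGraph.fromRel (fun x y => ∃ b, y.val = b :: x.val)

/-- The root of the complete binary tree. -/
def CBTroot (h : ℕ) : {l : List Bool // l.length ≤ h} := ⟨[], by simp⟩

/-- The complete ternary tree of height `h`, as a simple graph. -/
def CTT (h : ℕ) : SimpleGraph {l : List (Fin 3) // l.length ≤ h} :=
  SimpleGraph.fromRel (fun x y => ∃ b, y.val = b :: x.val)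

/-- The root of the complete ternary tree. -/
def CTTroot (h : ℕ) : {l : List (Fin 3) // l.length ≤ h} := ⟨[], by simp⟩

/-- There are `a ∈ A` and `b ∈ B` joined by a walk of `G` avoiding `C`. -/
def LinkedAvoiding {V : Type} (G : SimpleGraph V) (A B C : Set V) : Prop :=
  ∃ a ∈ A, ∃ b ∈ B, ∃ p : G.Walk a b, ∀ x ∈ p.support, x ∉ C

/-- The classes `𝒯_h`: `InT 0 G` iff `G` is connected (hence non-empty);
`InT (h+1) G` iff `G` is connected and has three pairwise disjoint vertex sets
inducing graphs in `𝒯_h`, any two of which are linked by a path avoiding the third. -/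
def InTAux : ℕ → (V : Type) → SimpleGraph V → Prop
  | 0, _, G => G.Connected
  | h + 1, V, G => G.Connected ∧ ∃ V₁ V₂ V₃ : Set V,
      Disjoint V₁ V₂ ∧ Disjoint V₁ V₃ ∧ Disjoint V₂ V₃ ∧
      InTAux h V₁ (G.induce V₁) ∧ InTAux h V₂ (G.induce V₂) ∧ InTAux h V₃ (G.induce V₃) ∧
      LinkedAvoiding G V₁ V₂ V₃ ∧ LinkedAvoiding G V₁ V₃ V₂ ∧ LinkedAvoiding G V₂ V₃ V₁

def InT (h : ℕ) {V : Type} (G : SimpleGraph V) : Prop := InTAux h V G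

section Graph

variable {α β : Type*}

theorem exists_map_sumInl_eq {G : SimpleGraph α} {H : SimpleGraph β} {a b : α} :
    ∀ p : (G ⊕g H).Walk (.inl a) (.inl b), ∃ q : G.Walk a b, q.map Embedding.sumInl.toHom = p
  | .nil => ⟨.nil, rfl⟩
  | .cons (v := .inl _) h p =>
    let ⟨q, hq⟩ := exists_map_sumInl_eq p
    ⟨.cons h q, congrArg (Walk.cons h) hq⟩
  | .cons (v := .inr _) h _ => (not_adj_sum_inl_inr _ _ h).elim

theorem not_isCycle_sum_inl {G : SimpleGraph α} {H : SimpleGraph β} (hG : G.IsAcyclic) {a : α}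
    (p : (G ⊕g H).Walk (.inl a) (.inl a)) : ¬ p.IsCycle := by
  obtain ⟨q, rfl⟩ := exists_map_sumInl_eq p
  exact fun h => hG q h.of_map

theorem isAcyclic_sum {G : SimpleGraph α} {H : SimpleGraph β} (hG : G.IsAcyclic)
    (hH : H.IsAcyclic) : (G ⊕g H).IsAcyclic
  | .inl _, p => not_isCycle_sum_inl hG p
  | .inr _, p => fun hp =>
    not_isCycle_sum_inl hH (p.map Iso.sumComm.toHom) (hp.map Iso.sumComm.injective)

theorem isTree_sum_sup_edge {G : SimpleGraph α} {H : SimpleGraph β} (hG : G.IsTree)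
    (hH : H.IsTree) (a : α) (b : β) : ((G ⊕g H) ⊔ edge (.inl a) (.inr b)).IsTree where
  connected := hG.connected.sum_sup_edge hH.connected
  isAcyclic := (isAcyclic_sum hG.isAcyclic hH.isAcyclic).sup_edge_of_not_reachable
    (not_reachable_sum_inl_inr a b)

theorem connected_induce_image {G : SimpleGraph α} {H : SimpleGraph β} (f : G →g H) {s : Set α}
    (hs : (G.induce s).Connected) : (H.induce (f '' s)).Connected :=
  hs.map (induceHom f (Set.mapsTo_image f s)) (Set.surjective_mapsTo_image_restrict f s)

theorem exists_path_support_subset_of_preconnected_induce {G : SimpleGraph α} {s : Set α}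
    (hs : (G.induce s).Preconnected) {a b : α} (ha : a ∈ s) (hb : b ∈ s) :
    ∃ p : G.Path a b, ∀ c ∈ p.1.support, c ∈ s := by
  obtain ⟨p, hp⟩ := (hs ⟨a, ha⟩ ⟨b, hb⟩).exists_isPath
  refine ⟨⟨p.map (Embedding.induce s).toHom, hp.map Subtype.val_injective⟩, fun c hc => ?_⟩
  obtain ⟨d, -, rfl⟩ := List.mem_map.1 (Walk.support_map _ p ▸ hc)
  exact d.2

theorem preconnected_induce_inter {T : SimpleGraph α} (hT : T.IsAcyclic) {s t : Set α}
    (hs : (T.induce s).Preconnected) (ht : (T.induce t).Preconnected) :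
    (T.induce (s ∩ t)).Preconnected := by
  rintro ⟨a, has, hat⟩ ⟨b, hbs, hbt⟩
  obtain ⟨p, hp⟩ := exists_path_support_subset_of_preconnected_induce hs has hbs
  obtain ⟨q, hq⟩ := exists_path_support_subset_of_preconnected_induce ht hat hbt
  have hpq : p = q := (hT.subsingleton_path a b).elim p q
  exact ⟨p.1.induce (s ∩ t) fun c hc => ⟨hp c hc, hq c (hpq ▸ hc)⟩⟩

theorem exists_adj_boundary {G : SimpleGraph α} (hG : G.Preconnected) {s : Set α}
    (hs : s.Nonempty) (hs' : sᶜ.Nonempty) : ∃ u ∈ s, ∃ v ∉ s, G.Adj u v := by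
  obtain ⟨a, ha⟩ := hs
  obtain ⟨b, hb⟩ := hs'
  obtain ⟨p⟩ := hG a b
  obtain ⟨d, -, hfst, hsnd⟩ := p.exists_boundary_dart s ha hb
  exact ⟨d.fst, hfst, d.snd, hsnd, d.adj⟩

theorem exists_subset_not_adj_of_not_preconnected_induce {G : SimpleGraph α} {s : Set α}
    (hs : ¬ (G.induce s).Preconnected) :
    ∃ t ⊆ s, t.Nonempty ∧ (s \ t).Nonempty ∧ ∀ u ∈ t, ∀ v ∈ s \ t, ¬ G.Adj u v := by
  simp only [Preconnected, not_forall] at hs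
  obtain ⟨a, b, hab⟩ := hs
  refine ⟨Subtype.val '' {c | (G.induce s).Reachable a c}, Subtype.coe_image_subset _ _,
    ⟨a, a, .refl a, rfl⟩, ⟨b, b.2, ?_⟩, ?_⟩
  · rintro ⟨c, hc, hcb⟩
    exact hab (Subtype.ext hcb ▸ hc)
  · rintro _ ⟨u, hu, rfl⟩ v ⟨hvs, hv⟩ huv
    exact hv ⟨⟨v, hvs⟩, hu.trans (Adj.reachable (G := G.induce s) huv), rfl⟩

end Graph

section EdgeSide

variable {α : Type*} {T : SimpleGraph α} {x y : α}

/-- The nodes that the vertex `x` separates from `y`. For an edge `xy` of a tree `T` this is the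
node set of the subtree `T_{x|y}`. -/
def edgeSide (T : SimpleGraph α) (x y : α) : Set α :=
  {z | ∀ w : T.Walk z y, x ∈ w.support}

theorem left_mem_edgeSide : x ∈ edgeSide T x y := fun w => w.start_mem_support

theorem eq_and_eq_of_adj_edgeSide (hT : T.IsAcyclic) (hxy : T.Adj x y) {u v : α}
    (huv : T.Adj u v) (hu : u ∈ edgeSide T x y) (hv : v ∉ edgeSide T x y) : u = x ∧ v = y := by
  obtain ⟨p, hp⟩ := not_forall.1 hv
  obtain rfl : x = u := (List.mem_cons.1 (hu (.cons huv p))).resolve_right hp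
  have hbridge : T.IsBridge s(x, y) := isAcyclic_iff_forall_adj_isBridge.1 hT hxy
  have hmem := isBridge_iff_forall_walk_mem_edges.1 hbridge (.cons huv p)
  rw [Walk.edges_cons, List.mem_cons] at hmem
  have heq := hmem.resolve_right fun h => hp (p.fst_mem_support_of_mem_edges h)
  exact ⟨rfl, (Sym2.congr_right.1 heq).symm⟩

open Classical in
/-- The embedding of a forest `T` into two copies of `T` joined by the edge from `y` in the first
copy to `x` in the second, sending the `x`-side of the edge `xy` to the second copy and the
remaining nodes to the first. -/
noncomputable def edgeSideHom (hT : T.IsAcyclic) (hxy : T.Adj x y) :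
    T →g (T ⊕g T) ⊔ edge (.inl y) (.inr x) where
  toFun z := if z ∈ edgeSide T x y then .inr z else .inl z
  map_rel' {u v} huv := by
    by_cases hu : u ∈ edgeSide T x y <;> by_cases hv : v ∈ edgeSide T x y
    · exact .inl (by simpa [hu, hv] using huv)
    · obtain ⟨rfl, rfl⟩ := eq_and_eq_of_adj_edgeSide hT hxy huv hu hv
      simp [hu, hv, edge_adj]
    · obtain ⟨rfl, rfl⟩ := eq_and_eq_of_adj_edgeSide hT hxy huv.symm hv hu
      simp [hu, hv, edge_adj]
    · exact .inl (by simpa [hu, hv] using huv)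

theorem edgeSideHom_eq_inl_iff (hT : T.IsAcyclic) (hxy : T.Adj x y) {z z' : α} :
    edgeSideHom hT hxy z = .inl z' ↔ z = z' ∧ z ∉ edgeSide T x y := by
  by_cases hz : z ∈ edgeSide T x y <;> simp [edgeSideHom, hz]

theorem edgeSideHom_eq_inr_iff (hT : T.IsAcyclic) (hxy : T.Adj x y) {z z' : α} :
    edgeSideHom hT hxy z = .inr z' ↔ z = z' ∧ z ∈ edgeSide T x y := by
  by_cases hz : z ∈ edgeSide T x y <;> simp [edgeSideHom, hz]

end EdgeSide

namespace TreeDecomp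

variable {V : Type} {G : SimpleGraph V} (D : TreeDecomp G)

/-- The decomposition has minimum width among all tree decompositions of `G`. -/
def IsOptimal : Prop :=
  ∀ k, TwLE G k → ∀ x, (D.bag x).card ≤ k + 1

variable {D} in
theorem IsOptimal.of_bag_subset {D' : TreeDecomp G} (hD : D.IsOptimal)
    (h : ∀ x', ∃ x, D'.bag x' ⊆ D.bag x) : D'.IsOptimal := fun k hk x' =>
  let ⟨x, hx⟩ := h x'
  (Finset.card_le_card hx).trans (hD k hk x)

theorem exists_twLE [Finite V] (G : SimpleGraph V) : ∃ k, TwLE G k := by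
  have := Fintype.ofFinite V
  refine ⟨Fintype.card V, ⟨Unit, ⊥, .of_subsingleton, fun _ => Finset.univ, by simp, by simp, ?_⟩,
    fun _ => Nat.le_succ _⟩
  intro v
  have : Nonempty {x : Unit | v ∈ Finset.univ} := ⟨(), Finset.mem_univ v⟩
  exact .of_subsingleton

theorem exists_isOptimal [Finite V] (G : SimpleGraph V) : ∃ D : TreeDecomp G, D.IsOptimal := by
  classical
  obtain ⟨D, hD⟩ := Nat.find_spec (exists_twLE G)
  exact ⟨D, fun k hk x => (hD x).trans (Nat.add_le_add_right (Nat.find_min' _ hk) 1)⟩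

/-- The incidences of pairs of vertices with bags containing both. -/
def bagPairs : Set (D.ι × V × V) :=
  {t | t.2.1 ∈ D.bag t.1 ∧ t.2.2 ∈ D.bag t.1}

/-- The sum of the squares of the bag sizes, for a finite decomposition of a finite graph. -/
noncomputable def energy : ℕ := D.bagPairs.ncard

/-- The restriction of a tree decomposition to a subtree meeting the bags of every vertex and
every edge. -/
def restrict (S : Set D.ι) (hS : (D.tree.induce S).Connected) (hv : ∀ v, ∃ x ∈ S, v ∈ D.bag x)
    (he : ∀ u v, G.Adj u v → ∃ x ∈ S, u ∈ D.bag x ∧ v ∈ D.bag x) : TreeDecomp G where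
  ι := S
  tree := D.tree.induce S
  isTree := ⟨hS, D.isTree.isAcyclic.induce S⟩
  bag x := D.bag x
  covers v := let ⟨x, hx, h⟩ := hv v; ⟨⟨x, hx⟩, h⟩
  coversEdge u v huv := let ⟨x, hx, h⟩ := he u v huv; ⟨⟨x, hx⟩, h⟩
  bagConn v := by
    have hpre := preconnected_induce_inter D.isTree.isAcyclic hS.preconnected
      (D.bagConn v).preconnected
    obtain ⟨x, hx, hvx⟩ := hv v
    have : Nonempty ↑(S ∩ {x | v ∈ D.bag x}) := ⟨⟨x, hx, hvx⟩⟩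
    let f : D.tree.induce (S ∩ {x | v ∈ D.bag x}) →g
        (D.tree.induce S).induce {x : S | v ∈ D.bag x} := ⟨fun z => ⟨⟨z, z.2.1⟩, z.2.2⟩, id⟩
    exact Connected.map f (fun z => ⟨⟨z.1.1, z.1.2, z.2⟩, rfl⟩) ⟨hpre⟩

theorem bag_restrict_subset (S : Set D.ι) (hS hv he) (x : (D.restrict S hS hv he).ι) :
    ∃ x', (D.restrict S hS hv he).bag x ⊆ D.bag x' :=
  ⟨Subtype.val (p := (· ∈ S)) x, subset_rfl⟩

theorem energy_restrict_le [Finite V] [Finite D.ι] (S : Set D.ι) (hS hv he) :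
    (D.restrict S hS hv he).energy ≤ D.energy :=
  Set.ncard_le_ncard_of_injOn (Prod.map Subtype.val id) (fun _ ht => ht)
    (Subtype.val_injective.prodMap Function.injective_id).injOn

theorem exists_finite_isOptimal [Finite V] (G : SimpleGraph V) :
    ∃ D : TreeDecomp G, Finite D.ι ∧ D.IsOptimal := by
  obtain ⟨D, hD⟩ := exists_isOptimal G
  have := D.isTree.connected.nonempty
  choose c hc using D.covers
  choose e he using fun d : G.Dart => D.coversEdge d.adj
  have : Finite G.Dart := .of_injective _ Dart.toProd_injective
  obtain ⟨S, hsub, hS⟩ := extend_finset_to_connected D.isTree.connected.preconnected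
    (t := (Set.toFinite (insert (Classical.arbitrary _) (Set.range c ∪ Set.range e))).toFinset)
    (by simp)
  rw [Set.Finite.toFinset_subset, Set.insert_subset_iff, Set.union_subset_iff] at hsub
  refine ⟨D.restrict S hS (fun v => ⟨c v, hsub.2.1 ⟨v, rfl⟩, hc v⟩)
    fun u v huv => ⟨e ⟨(u, v), huv⟩, hsub.2.2 ⟨_, rfl⟩, he ⟨(u, v), huv⟩⟩, ?_, ?_⟩
  · exact inferInstanceAs (Finite (S : Set D.ι))
  · exact hD.of_bag_subset (D.bag_restrict_subset _ _ _ _)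

theorem connected_induce_bag_nonempty (hG : G.Connected) :
    (D.tree.induce {x | (D.bag x).Nonempty}).Connected := by
  set N := {x | (D.bag x).Nonempty}
  have hN (v : V) : {x | v ∈ D.bag x} ⊆ N := fun _ hx => ⟨v, hx⟩
  have hbag {v : V} {a b : D.ι} (ha : v ∈ D.bag a) (hb : v ∈ D.bag b) :
      (D.tree.induce N).Reachable ⟨a, v, ha⟩ ⟨b, v, hb⟩ :=
    ((D.bagConn v).preconnected ⟨a, ha⟩ ⟨b, hb⟩).map (induceHomOfLE D.tree (hN v)).toHom
  have hwalk {u v : V} (p : G.Walk u v) : ∀ a b (ha : u ∈ D.bag a) (hb : v ∈ D.bag b),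
      (D.tree.induce N).Reachable ⟨a, u, ha⟩ ⟨b, v, hb⟩ := by
    induction p with
    | nil => exact fun _ _ ha hb => hbag ha hb
    | cons h _ ih =>
      intro a b ha hb
      obtain ⟨c, huc, hwc⟩ := D.coversEdge h
      exact (hbag ha huc).trans (ih c b hwc hb)
  obtain ⟨v⟩ := hG.nonempty
  obtain ⟨x, hx⟩ := D.covers v
  have : Nonempty N := ⟨⟨x, v, hx⟩⟩
  refine ⟨?_⟩
  rintro ⟨a, u, ha⟩ ⟨b, w, hb⟩
  obtain ⟨p⟩ := hG.preconnected u w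
  exact hwalk p a b ha hb

theorem exists_isOptimal_energy_minimal [Finite V] (hG : G.Connected) :
    ∃ D : TreeDecomp G, Finite D.ι ∧ D.IsOptimal ∧ (∀ x, (D.bag x).Nonempty) ∧
      ∀ D' : TreeDecomp G, Finite D'.ι → D'.IsOptimal → D.energy ≤ D'.energy := by
  obtain ⟨D, ⟨hfin, hopt⟩, hmin⟩ := exists_minimalFor_of_wellFoundedLT
    (fun D : TreeDecomp G => Finite D.ι ∧ D.IsOptimal) energy (exists_finite_isOptimal G)
  refine ⟨D.restrict {x | (D.bag x).Nonempty} (D.connected_induce_bag_nonempty hG) ?_ ?_,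
    Subtype.finite, hopt.of_bag_subset (D.bag_restrict_subset _ _ _ _), fun x => x.2,
    fun D' hfin' hopt' => (D.energy_restrict_le _ _ _ _).trans ?_⟩
  · intro v
    obtain ⟨x, hx⟩ := D.covers v
    exact ⟨x, ⟨v, hx⟩, hx⟩
  · intro u v huv
    obtain ⟨x, hu, hv⟩ := D.coversEdge huv
    exact ⟨x, ⟨u, hu⟩, hu, hv⟩
  · exact (le_total D.energy D'.energy).elim id (hmin ⟨hfin', hopt'⟩)

/-- The vertex set of `G_{x|y}`: the union of the bags on the `x`-side of the edge `xy`. -/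
def sideVerts (x y : D.ι) : Set V :=
  {v | ∃ z ∈ edgeSide D.tree x y, v ∈ D.bag z}

section Side

variable {x y : D.ι}

theorem bag_subset_sideVerts : ↑(D.bag x) ⊆ D.sideVerts x y :=
  fun _ hv => ⟨x, left_mem_edgeSide, hv⟩

theorem mem_bag_of_mem_sideVerts (hxy : D.tree.Adj x y) {v : V} {z : D.ι}
    (hv : v ∈ D.sideVerts x y) (hz : z ∉ edgeSide D.tree x y) (hvz : v ∈ D.bag z) :
    v ∈ D.bag x := by
  obtain ⟨z', hz', hvz'⟩ := hv
  obtain ⟨a, ha, b, hb, hab⟩ := exists_adj_boundary (D.bagConn v).preconnected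
    (s := Subtype.val ⁻¹' edgeSide D.tree x y) ⟨⟨z', hvz'⟩, hz'⟩ ⟨⟨z, hvz⟩, hz⟩
  exact (eq_and_eq_of_adj_edgeSide D.isTree.isAcyclic hxy hab ha hb).1 ▸ a.2

theorem exists_mem_bag_of_subset_sideVerts (hG : G.Preconnected) (hxy : D.tree.Adj x y)
    {B : Set V} (hsub : B ⊆ D.sideVerts x y) (hne : B.Nonempty) (hcompl : Bᶜ.Nonempty)
    (hB : ∀ u ∈ B, ∀ v ∈ D.sideVerts x y \ B, ¬ G.Adj u v) : ∃ v ∈ B, v ∈ D.bag x := by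
  obtain ⟨u, hu, v, hv, huv⟩ := exists_adj_boundary hG hne hcompl
  have hv_side : v ∉ D.sideVerts x y := fun h => hB u hu v ⟨h, hv⟩ huv
  obtain ⟨z, huz, hvz⟩ := D.coversEdge huv
  have hz : z ∉ edgeSide D.tree x y := fun h => hv_side ⟨z, h, hvz⟩
  exact ⟨u, hu, D.mem_bag_of_mem_sideVerts hxy (hsub hu) hz huz⟩

theorem exists_not_adj_of_not_preconnected_sideVerts (hG : G.Preconnected)
    (hxy : D.tree.Adj x y) (hdisc : ¬ (G.induce (D.sideVerts x y)).Preconnected) :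
    ∃ B : Set V, (∀ u ∈ B, ∀ v ∈ D.sideVerts x y \ B, ¬ G.Adj u v) ∧
      (∃ u ∈ B, u ∈ D.bag x) ∧ ∃ v ∉ B, v ∈ D.bag x := by
  obtain ⟨B, hsub, hB, hrest, hadj⟩ := exists_subset_not_adj_of_not_preconnected_induce hdisc
  have hadj' : ∀ u ∈ D.sideVerts x y \ B, ∀ v ∈ D.sideVerts x y \ (D.sideVerts x y \ B),
      ¬ G.Adj u v := fun u hu v hv huv =>
    hadj v (Set.sdiff_sdiff_cancel_left hsub ▸ hv) u hu huv.symm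
  obtain ⟨v, hv, hvx⟩ := D.exists_mem_bag_of_subset_sideVerts hG hxy Set.sdiff_subset hrest
    (hB.mono fun _ hu hv => hv.2 hu) hadj'
  exact ⟨B, hadj, D.exists_mem_bag_of_subset_sideVerts hG hxy hsub hB
    (hrest.mono fun _ hv => hv.2) hadj, v, hv.2, hvx⟩

variable (x y) in
open Classical in
/-- The bags of `TreeDecomp.split`: in the first copy of the tree, `B` is removed from the bags on
the `x`-side; in the second, those bags are intersected with `B` and all others are empty. -/
noncomputable def splitBag (B : Set V) : D.ι ⊕ D.ι → Finset V
  | .inl z => {v ∈ D.bag z | z ∈ edgeSide D.tree x y → v ∉ B}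
  | .inr z => {v ∈ D.bag z | z ∈ edgeSide D.tree x y ∧ v ∈ B}

variable {D} {B : Set V} {v : V} {z : D.ι}

theorem mem_splitBag_inl :
    v ∈ D.splitBag x y B (.inl z) ↔ v ∈ D.bag z ∧ (z ∈ edgeSide D.tree x y → v ∉ B) := by
  simp only [splitBag, Finset.mem_filter]

theorem mem_splitBag_inr :
    v ∈ D.splitBag x y B (.inr z) ↔ v ∈ D.bag z ∧ z ∈ edgeSide D.tree x y ∧ v ∈ B := by
  simp only [splitBag, Finset.mem_filter]

theorem splitBag_subset (z : D.ι ⊕ D.ι) : D.splitBag x y B z ⊆ D.bag (z.elim id id) := by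
  rcases z with z | z
  · exact fun v hv => (mem_splitBag_inl.1 hv).1
  · exact fun v hv => (mem_splitBag_inr.1 hv).1

theorem setOf_mem_splitBag_of_notMem (hv : v ∉ B) :
    {z | v ∈ D.splitBag x y B z} = Sum.inl '' {z | v ∈ D.bag z} := by
  ext (z | z) <;> simp [mem_splitBag_inl, mem_splitBag_inr, hv]

theorem setOf_mem_splitBag_of_mem (hxy : D.tree.Adj x y) (hv : v ∈ B) :
    {z | v ∈ D.splitBag x y B z} =
      edgeSideHom D.isTree.isAcyclic hxy '' {z | v ∈ D.bag z} := by
  ext (z | z) <;>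
    simp [mem_splitBag_inl, mem_splitBag_inr, hv, edgeSideHom_eq_inl_iff, edgeSideHom_eq_inr_iff]

theorem connected_induce_mem_splitBag (hxy : D.tree.Adj x y) (B : Set V) (v : V) :
    (((D.tree ⊕g D.tree) ⊔ edge (.inl y) (.inr x)).induce
      {z | v ∈ D.splitBag x y B z}).Connected := by
  by_cases hv : v ∈ B
  · rw [setOf_mem_splitBag_of_mem hxy hv]
    exact connected_induce_image _ (D.bagConn v)
  · rw [setOf_mem_splitBag_of_notMem hv]
    exact connected_induce_image ((Hom.ofLE le_sup_left).comp Embedding.sumInl.toHom)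
      (D.bagConn v)

variable (D) in
/-- The tree decomposition obtained by splitting the branch `T_{x|y}` along a union `B` of
components of `G_{x|y}`: both copies of the branch are attached to `y`. The second copy of `T` is
kept whole for simplicity, with empty bags outside the branch. -/
noncomputable def split (hxy : D.tree.Adj x y)
    (hB : ∀ u ∈ B, ∀ v ∈ D.sideVerts x y \ B, ¬ G.Adj u v) : TreeDecomp G where
  ι := D.ι ⊕ D.ι
  tree := (D.tree ⊕g D.tree) ⊔ edge (.inl y) (.inr x)
  isTree := isTree_sum_sup_edge D.isTree D.isTree y x
  bag := D.splitBag x y B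
  covers v := by
    obtain ⟨z, hv⟩ := D.covers v
    by_cases h : z ∈ edgeSide D.tree x y ∧ v ∈ B
    · exact ⟨.inr z, mem_splitBag_inr.2 ⟨hv, h⟩⟩
    · exact ⟨.inl z, mem_splitBag_inl.2 ⟨hv, not_and.1 h⟩⟩
  coversEdge u v huv := by
    obtain ⟨z, hu, hv⟩ := D.coversEdge huv
    by_cases hz : z ∈ edgeSide D.tree x y
    · have huB : u ∈ B → v ∈ B := fun h => by_contra fun h' => hB u h v ⟨⟨z, hz, hv⟩, h'⟩ huv
      have hvB : v ∈ B → u ∈ B := fun h => by_contra fun h' => hB v h u ⟨⟨z, hz, hu⟩, h'⟩ huv.symm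
      by_cases h : u ∈ B
      · exact ⟨.inr z, mem_splitBag_inr.2 ⟨hu, hz, h⟩, mem_splitBag_inr.2 ⟨hv, hz, huB h⟩⟩
      · exact ⟨.inl z, mem_splitBag_inl.2 ⟨hu, fun _ => h⟩,
          mem_splitBag_inl.2 ⟨hv, fun _ => mt hvB h⟩⟩
    · exact ⟨.inl z, mem_splitBag_inl.2 ⟨hu, fun h => absurd h hz⟩,
        mem_splitBag_inl.2 ⟨hv, fun h => absurd h hz⟩⟩
  bagConn := connected_induce_mem_splitBag hxy B

theorem disjoint_splitBag (z : D.ι) :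
    Disjoint (D.splitBag x y B (.inl z)) (D.splitBag x y B (.inr z)) :=
  Finset.disjoint_left.2 fun _ hl hr =>
    have ⟨_, hz, hv⟩ := mem_splitBag_inr.1 hr
    (mem_splitBag_inl.1 hl).2 hz hv

theorem energy_split_lt [Finite V] [Finite D.ι] (hxy : D.tree.Adj x y)
    (hB : ∀ u ∈ B, ∀ v ∈ D.sideVerts x y \ B, ¬ G.Adj u v) {u v : V} (hux : u ∈ D.bag x)
    (hvx : v ∈ D.bag x) (hu : u ∈ B) (hv : v ∉ B) : (D.split hxy hB).energy < D.energy := by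
  let π : (D.ι ⊕ D.ι) × V × V → D.ι × V × V := Prod.map (Sum.elim id id) id
  have hinj : Set.InjOn π (D.split hxy hB).bagPairs := by
    have hdisj {z : D.ι} {w : V} (hl : w ∈ D.splitBag x y B (.inl z)) :
        w ∉ D.splitBag x y B (.inr z) := Finset.disjoint_left.1 (disjoint_splitBag z) hl
    rintro ⟨z | z, a, b⟩ h ⟨z' | z', a', b'⟩ h' heq <;>
      obtain ⟨rfl, rfl, rfl⟩ : z = z' ∧ a = a' ∧ b = b' := by simpa [π] using heq
    · rfl
    · exact absurd h'.1 (hdisj h.1)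
    · exact absurd h.1 (hdisj h'.1)
    · rfl
  have hsub : π '' (D.split hxy hB).bagPairs ⊆ D.bagPairs := by
    rintro _ ⟨⟨z, a, b⟩, ⟨ha, hb⟩, rfl⟩
    exact ⟨splitBag_subset z ha, splitBag_subset z hb⟩
  have hnot : (x, u, v) ∉ π '' (D.split hxy hB).bagPairs := by
    rintro ⟨⟨z | z, a, b⟩, ⟨ha, hb⟩, heq⟩ <;>
      obtain ⟨rfl, rfl, rfl⟩ : z = x ∧ a = u ∧ b = v := by simpa [π] using heq
    · exact (mem_splitBag_inl.1 ha).2 left_mem_edgeSide hu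
    · exact hv (mem_splitBag_inr.1 hb).2.2
  calc (D.split hxy hB).energy = (π '' (D.split hxy hB).bagPairs).ncard :=
        hinj.ncard_image.symm
    _ < D.energy := Set.ncard_lt_ncard
        (hsub.ssubset_of_mem_notMem (show (x, u, v) ∈ D.bagPairs from ⟨hux, hvx⟩) hnot)

end Side

end TreeDecomp

theorem stmt7 {V : Type} [Fintype V] (G : SimpleGraph V) (hG : G.Connected) :
    ∃ D : TreeDecomp G,
      (∀ k, TwLE G k → ∀ x, (D.bag x).card ≤ k + 1) ∧
      ∀ ⦃x y : D.ι⦄, D.tree.Adj x y →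
        (G.induce {v | ∃ z, (∀ w : D.tree.Walk z y, x ∈ w.support) ∧ v ∈ D.bag z}).Connected := by
  obtain ⟨D, hfin, hopt, hne, hmin⟩ := TreeDecomp.exists_isOptimal_energy_minimal hG
  refine ⟨D, hopt, fun x y hxy => ?_⟩
  change (G.induce (D.sideVerts x y)).Connected
  have : Nonempty (D.sideVerts x y) :=
    (Set.Nonempty.mono D.bag_subset_sideVerts (hne x)).to_subtype
  refine ⟨by_contra fun hdisc => ?_⟩
  obtain ⟨B, hB, ⟨u, hu, hux⟩, v, hv, hvx⟩ :=
    D.exists_not_adj_of_not_preconnected_sideVerts hG.preconnected hxy hdisc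
  have hlt : (D.split hxy hB).energy < D.energy := TreeDecomp.energy_split_lt hxy hB hux hvx hu hv
  exact hlt.not_ge (hmin _ (inferInstanceAs (Finite (D.ι ⊕ D.ι)))
    (hopt.of_bag_subset fun z => ⟨_, TreeDecomp.splitBag_subset z⟩))
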